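/- For an arbitrary canonical state w ∈ W, any formula ¬[C]^T_X φ ∈ F(w), and any action profile s ∈ Δ^C, there are canonical states w', v ∈ W and a complete action profile δ ∈ Δ^𝒜 such that w ∼_X w', s =_C δ, T ⊆ 𝒯_{w'}, T ⊆ 𝒯_v, (w', δ, v) ∈ M, and φ ∉ F(v). -/

import Mathlib

/- Language: formulas over atomic propositions P, data variables V, actors 𝒜 = A.
   `bel T X φ` is B^T_X φ ; `str C T X φ` is [C]^T_X φ. -/
inductive Formula (P V A : Type) : Type
  | atom : P → Formula P V A
  | neg : Formula P V A → Formula P V A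
  | imp : Formula P V A → Formula P V A → Formula P V A
  | bel : Set V → Set V → Formula P V A → Formula P V A
  | str : Set A → Set V → Set V → Formula P V A → Formula P V A

variable {P V A : Type}

/-- Propositional tautologies: true under every valuation respecting ¬ and →. -/
def Tautology (φ : Formula P V A) : Prop :=
  ∀ v : Formula P V A → Prop,
    (∀ ψ, v (Formula.neg ψ) ↔ ¬ v ψ) →
    (∀ ψ χ, v (Formula.imp ψ χ) ↔ (v ψ → v χ)) →
    v φ

/-- Theorems of the logical system of doxastic strategies. -/
inductive Thm : Formula P V A → Prop
  | taut {φ : Formula P V A} : Tautology φ → Thm φ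
  | truth {X : Set V} {φ : Formula P V A} :
      Thm (Formula.imp (Formula.bel ∅ X φ) φ)
  | negIntro {T X : Set V} {φ : Formula P V A} :
      Thm (Formula.imp (Formula.neg (Formula.bel T X φ))
        (Formula.bel ∅ X (Formula.neg (Formula.bel T X φ))))
  | distrib {T X : Set V} {φ ψ : Formula P V A} :
      Thm (Formula.imp (Formula.bel T X (Formula.imp φ ψ))
        (Formula.imp (Formula.bel T X φ) (Formula.bel T X ψ)))
  | trust {T X Y : Set V} {φ : Formula P V A} :
      Thm (Formula.bel T X (Formula.imp (Formula.bel T Y φ) φ))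
  | monoB {T T' X X' : Set V} {φ : Formula P V A} :
      T ⊆ T' → X ⊆ X' →
      Thm (Formula.imp (Formula.bel T X φ) (Formula.bel T' X' φ))
  | monoS {C C' : Set A} {T T' X X' : Set V} {φ : Formula P V A} :
      T ⊆ T' → X ⊆ X' → C ⊆ C' →
      Thm (Formula.imp (Formula.str C T X φ) (Formula.str C' T' X' φ))
  | coop {C D : Set A} {T X : Set V} {φ ψ : Formula P V A} :
      C ∩ D = ∅ →
      Thm (Formula.imp (Formula.str C T X (Formula.imp φ ψ))
        (Formula.imp (Formula.str D T X φ) (Formula.str (C ∪ D) T X ψ)))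
  | strIntro₁ {C : Set A} {T X : Set V} {φ : Formula P V A} :
      Thm (Formula.imp (Formula.str C T X φ) (Formula.bel T X (Formula.str C T X φ)))
  | strIntro₂ {C : Set A} {T X : Set V} {φ : Formula P V A} :
      Thm (Formula.imp (Formula.bel T X (Formula.str C T X φ)) (Formula.str C T X φ))
  | unavoid {T X Y : Set V} {φ : Formula P V A} :
      Thm (Formula.imp (Formula.bel T X (Formula.str ∅ T Y φ)) (Formula.str ∅ T X φ))
  | pub {T : Set V} {φ : Formula P V A} :
      Thm (Formula.imp (Formula.bel T ∅ φ) (Formula.str ∅ T ∅ φ))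
  | mp {φ ψ : Formula P V A} : Thm (Formula.imp φ ψ) → Thm φ → Thm ψ
  | nec {φ : Formula P V A} : Thm φ → Thm (Formula.bel ∅ ∅ φ)

/-- `Deduces F φ`: φ is derivable from F together with the theorems using only Modus Ponens. -/
inductive Deduces (F : Set (Formula P V A)) : Formula P V A → Prop
  | thm {φ : Formula P V A} : Thm φ → Deduces F φ
  | mem {φ : Formula P V A} : φ ∈ F → Deduces F φ
  | mp {φ ψ : Formula P V A} :
      Deduces F (Formula.imp φ ψ) → Deduces F φ → Deduces F ψ

def Consistent (F : Set (Formula P V A)) : Prop :=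
  ¬ ∃ φ : Formula P V A, Deduces F φ ∧ Deduces F (Formula.neg φ)

def MaximalConsistent (F : Set (Formula P V A)) : Prop :=
  Consistent F ∧ ∀ G : Set (Formula P V A), Consistent G → F ⊆ G → F = G

/-- A game. -/
structure Game (P V A : Type) : Type 1 where
  W : Type
  sim : V → W → W → Prop
  sim_equiv : ∀ x : V, Equivalence (sim x)
  trust : W → Set V
  Δ : Type
  delta_nonempty : Nonempty Δ
  M : W → (A → Δ) → W → Prop
  pi : P → Set W

/-- `w ∼_X u`. -/
def Game.simSet (G : Game P V A) (X : Set V) (w u : G.W) : Prop :=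
  ∀ x ∈ X, G.sim x w u

/-- The satisfaction relation `w ⊨ φ` (as `Sat G φ w`). -/
def Sat (G : Game P V A) : Formula P V A → G.W → Prop
  | Formula.atom p, w => w ∈ G.pi p
  | Formula.neg φ, w => ¬ Sat G φ w
  | Formula.imp φ ψ, w => Sat G φ w → Sat G ψ w
  | Formula.bel T X φ, w =>
      ∀ u : G.W, G.simSet X w u → T ⊆ G.trust u → Sat G φ u
  | Formula.str C T X φ, w =>
      ∃ s : {a : A // a ∈ C} → G.Δ,
        ∀ (u v : G.W) (δ : A → G.Δ),
          G.simSet X w u → T ⊆ G.trust u →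
          (∀ (a : A) (h : a ∈ C), s ⟨a, h⟩ = δ a) →
          G.M u δ v → T ⊆ G.trust v → Sat G φ v

/- ===================== Canonical game ===================== -/

/-- One block `X_i, b_i, T_i, F_i` of a canonical state. -/
structure Block (P V A B : Type) where
  X : Set V
  b : B
  T : Set V
  F : Set (Formula P V A)

variable {B : Type}

/-- `F(w)`: the last set of formulae of the sequence (or `F0` for the root). -/
def cF (F0 : Set (Formula P V A)) (l : List (Block P V A B)) : Set (Formula P V A) :=
  l.getLast?.elim F0 Block.F

/-- `𝒯_w = T(w)`: the last dataset of the sequence (or `T0` for the root). -/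
def cTrust (T0 : Set V) (l : List (Block P V A B)) : Set V :=
  l.getLast?.elim T0 Block.T

/-- Membership of a sequence in the set of canonical states `W`. -/
inductive IsState (T0 : Set V) (F0 : Set (Formula P V A)) :
    List (Block P V A B) → Prop
  | nil :
      (∀ (Y : Set V) (ψ : Formula P V A),
        Formula.imp (Formula.bel T0 Y ψ) ψ ∈ F0) →
      IsState T0 F0 []
  | snoc {l : List (Block P V A B)} {bl : Block P V A B} :
      IsState T0 F0 l →
      MaximalConsistent bl.F →
      (∀ φ : Formula P V A, Formula.bel ∅ bl.X φ ∈ cF F0 l → φ ∈ bl.F) →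
      (∀ (Y : Set V) (ψ : Formula P V A),
        Formula.imp (Formula.bel bl.T Y ψ) ψ ∈ bl.F) →
      IsState T0 F0 (l ++ [bl])

/-- The canonical states. -/
def CState (T0 : Set V) (F0 : Set (Formula P V A)) (B : Type) : Type :=
  {l : List (Block P V A B) // IsState T0 F0 l}

attribute [local instance] Classical.propDecidable

/-- Length of the longest common prefix of two sequences. -/
noncomputable def cpl {α : Type} : List α → List α → Nat
  | a :: as, b :: bs => if a = b then cpl as bs + 1 else 0
  | _, _ => 0

/-- The blocks labelling the edges on the unique simple path between two
nodes of the canonical tree. -/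
noncomputable def pathBlocks (w u : List (Block P V A B)) : List (Block P V A B) :=
  w.drop (cpl w u) ++ u.drop (cpl w u)

/-- `w ∼_x u` in the canonical game: every edge along the unique simple path
between `w` and `u` is labelled with `x`. -/
def csimVar (x : V) (w u : List (Block P V A B)) : Prop :=
  ∀ bl ∈ pathBlocks w u, x ∈ bl.X

/-- `w ∼_X u` in the canonical game. -/
def csim (X : Set V) (w u : List (Block P V A B)) : Prop :=
  ∀ x ∈ X, csimVar x w u

/-- The canonical mechanism `M`. -/
def Mech (T0 : Set V) (F0 : Set (Formula P V A))
    (w : CState T0 F0 B) (δ : A → Formula P V A × CState T0 F0 B)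
    (v : CState T0 F0 B) : Prop :=
  ∀ (C : Set A) (T X : Set V) (φ : Formula P V A),
    Formula.str C T X φ ∈ cF F0 w.1 →
    (∀ a ∈ C, (δ a).1 = φ) →
    (∀ a ∈ C, csim X w.1 (δ a).2.1) →
    T ⊆ cTrust T0 w.1 → T ⊆ cTrust T0 v.1 →
    φ ∈ cF F0 v.1

/-- Satisfaction `w ⊨ φ` on the canonical game (as `CSat T0 F0 φ w`). -/
def CSat (T0 : Set V) (F0 : Set (Formula P V A)) :
    Formula P V A → CState T0 F0 B → Prop
  | Formula.atom p, w => Formula.atom p ∈ cF F0 w.1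
  | Formula.neg φ, w => ¬ CSat T0 F0 φ w
  | Formula.imp φ ψ, w => CSat T0 F0 φ w → CSat T0 F0 ψ w
  | Formula.bel T X φ, w =>
      ∀ u : CState T0 F0 B, csim X w.1 u.1 → T ⊆ cTrust T0 u.1 → CSat T0 F0 φ u
  | Formula.str C T X φ, w =>
      ∃ s : {a : A // a ∈ C} → Formula P V A × CState T0 F0 B,
        ∀ (u v : CState T0 F0 B) (δ : A → Formula P V A × CState T0 F0 B),
          csim X w.1 u.1 → T ⊆ cTrust T0 u.1 →
          (∀ (a : A) (h : a ∈ C), s ⟨a, h⟩ = δ a) →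
          Mech T0 F0 u δ v → T ⊆ cTrust T0 v.1 → CSat T0 F0 φ v

/- ===================== Harmony ===================== -/

/-- Conjunction definable from ¬ and →. -/
def fand (φ ψ : Formula P V A) : Formula P V A :=
  Formula.neg (Formula.imp φ (Formula.neg ψ))

/-- A canonical tautology (verum). -/
noncomputable def verum (P V A : Type) [Nonempty (Formula P V A)] : Formula P V A :=
  Formula.imp (Classical.arbitrary (Formula P V A)) (Classical.arbitrary (Formula P V A))

/-- Conjunction of a finite list of formulae. -/
noncomputable def conjList [Nonempty (Formula P V A)] :
    List (Formula P V A) → Formula P V A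
  | [] => verum P V A
  | φ :: l => fand φ (conjList l)

/-- The pair `(F, G)` is in `T`-harmony: `F ⊬ [∅]^T_V ¬⋀G'` for each finite `G' ⊆ G`. -/
def THarmony [Nonempty (Formula P V A)] (T : Set V)
    (F G : Set (Formula P V A)) : Prop :=
  ∀ l : List (Formula P V A), (∀ ψ ∈ l, ψ ∈ G) →
    ¬ Deduces F (Formula.str ∅ T (Set.univ : Set V) (Formula.neg (conjList l)))

/-!
Let `F = F(w)`. Each `a ∈ C` votes for the formula `pr₁ (s a)`; call `ψ` enforced if `F` contains
`[D]^T_X ψ`, where `D` is the coalition of all voters for `ψ`. These coalitions are disjoint for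
different formulas, so by iterated Cooperation `C` can achieve whatever is deducible from the
enforced formulas. As `¬[C]^T_X φ ∈ F`, the enforced formulas are consistent with `¬φ`, and together
they extend to a maximal consistent set `G`, the label of `v`. By Belief in Unavoidability,
`B^T_X [∅]^T_V χ ∈ F` implies `χ ∈ G`, so the composite canonical relation of the normal modalities
`B^T_X` and `[∅]^T_V` factors through a maximal consistent set `F'`, the label of `w'`.

The state `w'` is a child of `w` carrying an element of `ℬ` so chosen that no state `pr₂ (s a)` lies
below `w'`. Hence `w' ∼_Y pr₂ (s a)` forces `Y ⊆ X`. Actors outside `C` vote for a tautology.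
-/

section Logic

open Formula

variable {F G Γ : Set (Formula P V A)} {χ ψ θ : Formula P V A} {C : Set A} {T X : Set V}

theorem Thm.imp_trans (h₁ : Thm (imp χ ψ)) (h₂ : Thm (imp ψ θ)) : Thm (imp χ θ) :=
  .mp (.mp (.taut fun v _ hi => by simp only [hi]; tauto) h₁) h₂

namespace Deduces

theorem trans (hFG : ∀ ψ ∈ F, Deduces G ψ) (h : Deduces F θ) : Deduces G θ := by
  induction h with
  | thm h => exact .thm h
  | mem h => exact hFG _ h
  | mp _ _ ih₁ ih₂ => exact .mp ih₁ ih₂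

theorem mono (hFG : F ⊆ G) (h : Deduces F θ) : Deduces G θ :=
  h.trans fun _ hψ => .mem (hFG hψ)

theorem thm_of_empty (h : Deduces ∅ θ) : Thm θ := by
  induction h with
  | thm h => exact h
  | mem h => exact absurd h (Set.notMem_empty _)
  | mp _ _ ih₁ ih₂ => exact .mp ih₁ ih₂

theorem imp_of_insert (h : Deduces (insert χ F) θ) : Deduces F (imp χ θ) := by
  have weaken : ∀ {ψ}, Deduces F ψ → Deduces F (imp χ ψ) := fun hψ =>
    .mp (.thm (.taut fun v _ hi => by simp only [hi]; tauto)) hψ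
  induction h with
  | thm h => exact weaken (.thm h)
  | mem h =>
    rcases h with rfl | h
    · exact .thm (.taut fun v _ hi => by simp only [hi]; tauto)
    · exact weaken (.mem h)
  | mp _ _ ih₁ ih₂ =>
    exact .mp (.mp (.thm (.taut fun v _ hi => by simp only [hi]; tauto)) ih₁) ih₂

theorem exists_finite (h : Deduces F θ) : ∃ s ⊆ F, s.Finite ∧ Deduces s θ := by
  induction h with
  | thm h => exact ⟨∅, Set.empty_subset F, Set.finite_empty, .thm h⟩
  | mem h => exact ⟨_, Set.singleton_subset_iff.2 h, Set.finite_singleton _, .mem rfl⟩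
  | mp _ _ ih₁ ih₂ =>
    obtain ⟨s, hsF, hs, h₁⟩ := ih₁
    obtain ⟨t, htF, ht, h₂⟩ := ih₂
    exact ⟨s ∪ t, Set.union_subset hsF htF, hs.union ht,
      .mp (h₁.mono Set.subset_union_left) (h₂.mono Set.subset_union_right)⟩

theorem exists_mem_of_sUnion {c : Set (Set (Formula P V A))} (hne : c.Nonempty)
    (hdir : DirectedOn (· ⊆ ·) c) (h : Deduces (⋃₀ c) θ) : ∃ s ∈ c, Deduces s θ := by
  obtain ⟨t, htc, ht, hθ⟩ := h.exists_finite
  obtain ⟨s, hs, hts⟩ := hdir.exists_mem_subset_of_finite_of_subset_sUnion hne ht htc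
  exact ⟨s, hs, hθ.mono hts⟩

end Deduces

namespace Consistent

theorem sUnion {c : Set (Set (Formula P V A))} (hne : c.Nonempty)
    (hdir : DirectedOn (· ⊆ ·) c) (hc : ∀ s ∈ c, Consistent s) : Consistent (⋃₀ c) := by
  rintro ⟨θ, hθ, hnθ⟩
  obtain ⟨s, hs, hθ⟩ := hθ.exists_mem_of_sUnion hne hdir
  obtain ⟨t, ht, hnθ⟩ := hnθ.exists_mem_of_sUnion hne hdir
  obtain ⟨u, hu, hsu, htu⟩ := hdir s hs t ht
  exact hc u hu ⟨θ, hθ.mono hsu, hnθ.mono htu⟩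

theorem setOf_deduces (hF : Consistent F) : Consistent {ψ | Deduces F ψ} :=
  fun ⟨θ, hθ, hnθ⟩ => hF ⟨θ, hθ.trans fun _ => id, hnθ.trans fun _ => id⟩

theorem insert_neg (h : ¬ Deduces F χ) : Consistent (insert (neg χ) F) :=
  fun ⟨_, hθ, hnθ⟩ => h <| .mp (.mp
    (.thm (.taut fun v hn hi => by simp only [hi, hn]; tauto)) hθ.imp_of_insert) hnθ.imp_of_insert

theorem exists_maximalConsistent (hF : Consistent F) : ∃ G, F ⊆ G ∧ MaximalConsistent G := by
  obtain ⟨G, hFG, hG⟩ := zorn_subset_nonempty {G : Set (Formula P V A) | Consistent G}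
    (fun c hc hchain hne =>
      ⟨⋃₀ c, .sUnion hne hchain.directedOn hc, fun _ => Set.subset_sUnion_of_mem⟩) F hF
  exact ⟨G, hFG, hG.prop, fun _ hH hGH => hG.eq_of_subset hH hGH⟩

end Consistent

namespace MaximalConsistent

theorem mem_of_deduces (hF : MaximalConsistent F) (h : Deduces F χ) : χ ∈ F := by
  have hins : Consistent (insert χ F) := fun ⟨θ, hθ, hnθ⟩ =>
    hF.1 ⟨θ, .mp hθ.imp_of_insert h, .mp hnθ.imp_of_insert h⟩
  rw [hF.2 _ hins (Set.subset_insert χ F)]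
  exact Set.mem_insert χ F

theorem mem_of_thm (hF : MaximalConsistent F) (h : Thm χ) : χ ∈ F :=
  hF.mem_of_deduces (.thm h)

theorem mem_of_imp_mem (hF : MaximalConsistent F) (h : imp χ ψ ∈ F) (hχ : χ ∈ F) : ψ ∈ F :=
  hF.mem_of_deduces (.mp (.mem h) (.mem hχ))

theorem mem_of_thm_imp (hF : MaximalConsistent F) (h : Thm (imp χ ψ)) (hχ : χ ∈ F) : ψ ∈ F :=
  hF.mem_of_imp_mem (hF.mem_of_thm h) hχ

theorem neg_mem_iff (hF : MaximalConsistent F) : neg χ ∈ F ↔ χ ∉ F := by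
  refine ⟨fun hn hχ => hF.1 ⟨χ, .mem hχ, .mem hn⟩, fun hχ => ?_⟩
  have hins : Consistent (insert (neg χ) F) := .insert_neg (mt hF.mem_of_deduces hχ)
  rw [hF.2 _ hins (Set.subset_insert _ F)]
  exact Set.mem_insert _ F

end MaximalConsistent

theorem exists_maximalConsistent_disjoint {D : Set (Formula P V A)} (hne : D.Nonempty)
    (hdir : DirectedOn (fun χ ψ => Thm (imp χ ψ)) D) (hD : ∀ χ ∈ D, ¬ Deduces Γ χ) :
    ∃ G, Γ ⊆ G ∧ MaximalConsistent G ∧ Disjoint G D := by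
  let consequences (χ : Formula P V A) : Set (Formula P V A) := {ψ | Deduces (insert (neg χ) Γ) ψ}
  have consequences_mono {χ ψ} (h : Thm (imp χ ψ)) : consequences χ ⊆ consequences ψ := by
    intro θ hθ
    refine Deduces.trans (Set.forall_mem_insert.2 ⟨?_, fun ρ hρ => .mem (.inr hρ)⟩) hθ
    exact .mp (.mp (.thm (.taut fun v hn hi => by simp only [hi, hn]; tauto)) (.thm h))
      (.mem (Set.mem_insert _ _))
  have hconsequences : Consistent (⋃₀ (consequences '' D)) := by
    refine .sUnion (hne.image consequences) ?_ (Set.forall_mem_image.2 fun χ hχ =>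
      (Consistent.insert_neg (hD χ hχ)).setOf_deduces)
    exact directedOn_image.2 (hdir.mono fun _ _ => consequences_mono)
  obtain ⟨G, hsub, hG⟩ := hconsequences.exists_maximalConsistent
  have hmem {χ ψ} (hχ : χ ∈ D) (h : Deduces (insert (neg χ) Γ) ψ) : ψ ∈ G :=
    hsub ⟨consequences χ, Set.mem_image_of_mem consequences hχ, h⟩
  obtain ⟨χ₀, hχ₀⟩ := hne
  exact ⟨G, fun ψ hψ => hmem hχ₀ (.mem (.inr hψ)), hG, Set.disjoint_right.2 fun χ hχ =>
    hG.neg_mem_iff.1 (hmem hχ (.mem (Set.mem_insert _ _)))⟩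

/-- A normal modality of the logic: an operation on formulas that satisfies the necessitation rule
and the distributivity axiom. Both `B^T_X` and `[∅]^T_X` are of this kind. -/
structure IsNormalModality (L : Formula P V A → Formula P V A) : Prop where
  nec {α : Formula P V A} : Thm α → Thm (L α)
  distrib {α β : Formula P V A} : Thm (imp (L (imp α β)) (imp (L α) (L β)))

namespace IsNormalModality

variable {L N : Formula P V A → Formula P V A}

theorem imp_map (hL : IsNormalModality L) (h : Thm (imp χ ψ)) : Thm (imp (L χ) (L ψ)) :=
  .mp hL.distrib (hL.nec h)

theorem mem_of_deduces_preimage (hL : IsNormalModality L) (hF : MaximalConsistent F)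
    (h : Deduces (L ⁻¹' F) θ) : L θ ∈ F := by
  induction h with
  | thm h => exact hF.mem_of_thm (hL.nec h)
  | mem h => exact h
  | mp _ _ ih₁ ih₂ => exact hF.mem_of_imp_mem (hF.mem_of_thm_imp hL.distrib ih₁) ih₂

theorem exists_maximalConsistent_between (hL : IsNormalModality L) (hN : IsNormalModality N)
    (hF : MaximalConsistent F) (hG : MaximalConsistent G) (hFG : N ⁻¹' (L ⁻¹' F) ⊆ G) :
    ∃ F', MaximalConsistent F' ∧ L ⁻¹' F ⊆ F' ∧ N ⁻¹' F' ⊆ G := by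
  rcases isEmpty_or_nonempty (Formula P V A) with _ | ⟨⟨θ⟩⟩
  · exact ⟨F, hF, isEmptyElim, isEmptyElim⟩
  have hne : Gᶜ.Nonempty := Set.nonempty_compl.2 fun huniv =>
    hG.1 ⟨θ, .mem (huniv ▸ Set.mem_univ θ), .mem (huniv ▸ Set.mem_univ _)⟩
  have hdir : DirectedOn (fun χ ψ => Thm (imp χ ψ)) (N '' Gᶜ) := by
    rintro _ ⟨χ, hχ, rfl⟩ _ ⟨ψ, hψ, rfl⟩
    refine ⟨N (imp (neg χ) ψ), Set.mem_image_of_mem N fun h => ?_, hN.imp_map ?_, hN.imp_map ?_⟩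
    · exact hψ (hG.mem_of_imp_mem h (hG.neg_mem_iff.2 hχ))
    all_goals exact .taut fun v hn hi => by simp only [hi, hn]; tauto
  obtain ⟨F', hLF', hF', hdisj⟩ := exists_maximalConsistent_disjoint (hne.image N) hdir
    (Γ := L ⁻¹' F) (Set.forall_mem_image.2 fun χ hχ h =>
      hχ (hFG (hL.mem_of_deduces_preimage hF h)))
  refine ⟨F', hF', hLF', fun χ hχ => ?_⟩
  by_contra hχG
  exact Set.disjoint_left.1 hdisj hχ (Set.mem_image_of_mem N hχG)

end IsNormalModality

theorem isNormalModality_bel (T X : Set V) :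
    IsNormalModality (bel T X : Formula P V A → Formula P V A) where
  nec h := .mp (.monoB (Set.empty_subset T) (Set.empty_subset X)) (.nec h)
  distrib := .distrib

theorem Thm.bel_empty_imp_str_empty : Thm (imp (bel T ∅ χ) (str (∅ : Set A) T X χ)) :=
  .imp_trans .pub (.monoS subset_rfl (Set.empty_subset X) subset_rfl)

theorem isNormalModality_str_empty (T X : Set V) :
    IsNormalModality (str ∅ T X : Formula P V A → Formula P V A) where
  nec h := .mp .bel_empty_imp_str_empty ((isNormalModality_bel T ∅).nec h)
  distrib {χ ψ} := by
    simpa only [Set.union_empty] using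
      Thm.coop (T := T) (X := X) (φ := χ) (ψ := ψ) (Set.inter_empty (∅ : Set A))

namespace MaximalConsistent

theorem str_biUnion_mem_of_finite (hF : MaximalConsistent F) {D : Formula P V A → Set A}
    (hfin : Γ.Finite) (hdisj : Γ.PairwiseDisjoint D) (hΓ : ∀ ψ ∈ Γ, str (D ψ) T X ψ ∈ F)
    (h : Deduces Γ θ) : str (⋃ ψ ∈ Γ, D ψ) T X θ ∈ F := by
  induction Γ, hfin using Set.Finite.induction_on generalizing θ with
  | empty =>
    rw [Set.biUnion_empty]
    exact hF.mem_of_thm ((isNormalModality_str_empty T X).nec h.thm_of_empty)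
  | @insert χ Γ hχ _ ih =>
    have ⟨hdisj, hχdisj⟩ := (Set.pairwiseDisjoint_insert_of_notMem hχ).1 hdisj
    have ⟨hχF, hΓF⟩ := Set.forall_mem_insert.1 hΓ
    have himp : str (⋃ ψ ∈ Γ, D ψ) T X (imp χ θ) ∈ F := ih hdisj hΓF h.imp_of_insert
    have hinter : (⋃ ψ ∈ Γ, D ψ) ∩ D χ = ∅ := Set.disjoint_iff_inter_eq_empty.1 <|
      Set.disjoint_iUnion₂_left.2 fun ψ hψ => (hχdisj ψ hψ).symm
    rw [Set.biUnion_insert, Set.union_comm]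
    exact hF.mem_of_imp_mem (hF.mem_of_thm_imp (.coop hinter) himp) hχF

theorem str_biUnion_mem (hF : MaximalConsistent F) {D : Formula P V A → Set A}
    (hdisj : Γ.PairwiseDisjoint D) (hΓ : ∀ ψ ∈ Γ, str (D ψ) T X ψ ∈ F) (h : Deduces Γ θ) :
    str (⋃ ψ ∈ Γ, D ψ) T X θ ∈ F := by
  obtain ⟨s, hsΓ, hs, hθ⟩ := h.exists_finite
  exact hF.mem_of_thm_imp (.monoS subset_rfl subset_rfl (Set.biUnion_subset_biUnion_left hsΓ))
    (hF.str_biUnion_mem_of_finite hs (hdisj.subset hsΓ) (fun ψ hψ => hΓ ψ (hsΓ hψ)) hθ)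

theorem str_mem_of_preimage_bel_subset (hF : MaximalConsistent F) (hG : MaximalConsistent G)
    (hFG : bel T X ⁻¹' F ⊆ G) (h : str C T X ψ ∈ G) : str C T X ψ ∈ F := by
  by_contra hnot
  have hnbel : neg (bel T X (str C T X ψ)) ∈ F :=
    hF.neg_mem_iff.2 (mt (hF.mem_of_thm_imp .strIntro₂) hnot)
  have hbel : bel T X (neg (bel T X (str C T X ψ))) ∈ F :=
    hF.mem_of_thm_imp (.imp_trans .negIntro (.monoB (Set.empty_subset T) subset_rfl)) hnbel
  exact hG.neg_mem_iff.1 (hFG hbel) (hG.mem_of_thm_imp .strIntro₁ h)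

end MaximalConsistent

end Logic

section Voting

open Formula

variable {S : Type} {F : Set (Formula P V A)} {C : Set A} {T X : Set V} {φ : Formula P V A}

/-- The actors of `C` who vote for `ψ`: the action they take in the profile `s` has `ψ` as its first
component. -/
def voters (s : C → Formula P V A × S) (ψ : Formula P V A) : Set A :=
  {a | ∃ ha : a ∈ C, (s ⟨a, ha⟩).1 = ψ}

/-- The formulas `ψ` that, according to `F`, the actors voting for `ψ` are able to achieve. -/
def enforced (F : Set (Formula P V A)) (T X : Set V) (s : C → Formula P V A × S) :
    Set (Formula P V A) :=
  {ψ | str (voters s ψ) T X ψ ∈ F}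

theorem voters_subset (s : C → Formula P V A × S) (ψ : Formula P V A) : voters s ψ ⊆ C :=
  fun _ ha => ha.1

theorem pairwise_disjoint_voters (s : C → Formula P V A × S) :
    Pairwise (Function.onFun Disjoint (voters s)) := fun _ _ hne =>
  Set.disjoint_left.2 fun _ ⟨_, h₁⟩ ⟨_, h₂⟩ => hne (h₁.symm.trans h₂)

namespace MaximalConsistent

theorem str_mem_of_deduces_enforced (hF : MaximalConsistent F) {s : C → Formula P V A × S}
    (h : Deduces (enforced F T X s) φ) : str C T X φ ∈ F :=
  hF.mem_of_thm_imp
    (.monoS subset_rfl subset_rfl (Set.iUnion₂_subset fun ψ _ => voters_subset s ψ))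
    (hF.str_biUnion_mem ((pairwise_disjoint_voters s).set_pairwise _) (fun _ => id) h)

theorem exists_enforced_subset (hF : MaximalConsistent F) (h : neg (str C T X φ) ∈ F)
    (s : C → Formula P V A × S) :
    ∃ F' G, MaximalConsistent F' ∧ MaximalConsistent G ∧ bel T X ⁻¹' F ⊆ F' ∧
      str ∅ T Set.univ ⁻¹' F' ⊆ G ∧ enforced F' T X s ⊆ G ∧ φ ∉ G := by
  have hφ : ¬ Deduces (enforced F T X s) φ :=
    mt hF.str_mem_of_deduces_enforced (hF.neg_mem_iff.1 h)
  obtain ⟨G, hsub, hG⟩ := (Consistent.insert_neg hφ).exists_maximalConsistent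
  have ⟨hφG, hFG⟩ := Set.insert_subset_iff.1 hsub
  have hunavoid : str ∅ T Set.univ ⁻¹' (bel T X ⁻¹' F) ⊆ G := fun χ hχ =>
    hFG <| hF.mem_of_thm_imp
      (.imp_trans .unavoid (.monoS subset_rfl subset_rfl (Set.empty_subset _))) hχ
  obtain ⟨F', hF', hbel, hstr⟩ := (isNormalModality_bel T X).exists_maximalConsistent_between
    (isNormalModality_str_empty T Set.univ) hF hG hunavoid
  exact ⟨F', G, hF', hG, hbel, hstr,
    fun ψ hψ => hFG (hF.str_mem_of_preimage_bel_subset hF' hbel hψ), hG.neg_mem_iff.1 hφG⟩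

end MaximalConsistent

end Voting

section CanonicalTree

open Formula

theorem cpl_append_right {α : Type} (l m : List α) : cpl l (l ++ m) = l.length := by
  induction l with
  | nil => simp [cpl]
  | cons a l ih => simp [cpl, ih]

theorem cpl_lt_length_of_not_prefix {α : Type} {l u : List α} (h : ¬ l <+: u) :
    cpl l u < l.length := by
  induction l generalizing u with
  | nil => exact absurd List.nil_prefix h
  | cons a l ih =>
    rcases u with _ | ⟨c, u⟩
    · simp [cpl]
    · by_cases hac : a = c
      · have hlu : ¬ l <+: u := fun hlu => h (List.cons_prefix_cons.2 ⟨hac, hlu⟩)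
        simpa [cpl, hac] using ih hlu
      · simp [cpl, hac]

variable {T0 : Set V} {F0 : Set (Formula P V A)} {X Y : Set V}
  {l u : List (Block P V A B)} {bl : Block P V A B}

theorem csim_append_singleton (h : X ⊆ bl.X) : csim X l (l ++ [bl]) := by
  intro x hx bl' hbl'
  obtain rfl : bl' = bl := by simpa [pathBlocks, cpl_append_right] using hbl'
  exact h hx

theorem subset_of_csim_of_not_prefix (h : ¬ l ++ [bl] <+: u) (hsim : csim Y (l ++ [bl]) u) :
    Y ⊆ bl.X := by
  have hcpl : cpl (l ++ [bl]) u ≤ l.length := by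
    simpa [Nat.lt_succ_iff] using cpl_lt_length_of_not_prefix h
  have hbl : bl ∈ pathBlocks (l ++ [bl]) u := by
    simp [pathBlocks, List.drop_append_of_le_length hcpl]
  exact fun x hx => hsim x hx bl hbl

theorem exists_label_not_prefix {ι : Type} (hB : Cardinal.mk ι < Cardinal.mk B)
    (l : List (Block P V A B)) (u : ι → List (Block P V A B)) :
    ∃ b : B, ∀ (bl : Block P V A B) (i : ι), bl.b = b → ¬ l ++ [bl] <+: u i := by
  by_contra! hused
  choose bl i hlabel hprefix using hused
  refine hB.not_ge (Cardinal.mk_le_of_injective (f := i) fun b c hbc => ?_)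
  have heq : l ++ [bl b] = l ++ [bl c] :=
    (List.prefix_of_prefix_length_le (hprefix b) (hbc ▸ hprefix c) (by simp)).eq_of_length
      (by simp)
  rw [← hlabel b, ← hlabel c, List.singleton_inj.1 (List.append_cancel_left heq)]

theorem cF_append_singleton (F0 : Set (Formula P V A)) (l : List (Block P V A B))
    (bl : Block P V A B) : cF F0 (l ++ [bl]) = bl.F := by
  simp [cF]

theorem cTrust_append_singleton (T0 : Set V) (l : List (Block P V A B))
    (bl : Block P V A B) : cTrust T0 (l ++ [bl]) = bl.T := by
  simp [cTrust]

namespace IsState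

theorem maximalConsistent_cF (hl : IsState T0 F0 l) (hF0 : MaximalConsistent F0) :
    MaximalConsistent (cF F0 l) := by
  cases hl with
  | nil _ => exact hF0
  | snoc _ hbl _ _ => rwa [cF_append_singleton]

theorem snoc_of_preimage_bel_subset (hl : IsState T0 F0 l) (hF : MaximalConsistent (cF F0 l))
    (hbl : MaximalConsistent bl.F) (h : bel bl.T bl.X ⁻¹' cF F0 l ⊆ bl.F) :
    IsState T0 F0 (l ++ [bl]) :=
  .snoc hl hbl
    (fun _ hχ => h (hF.mem_of_thm_imp (.monoB (Set.empty_subset _) subset_rfl) hχ))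
    (fun _ _ => h (hF.mem_of_thm .trust))

end IsState

theorem mech_extend {w v : CState T0 F0 B} {C : Set A} {T : Set V}
    {s : C → Formula P V A × CState T0 F0 B} {d : Formula P V A × CState T0 F0 B}
    (htrust : cTrust T0 w.1 ⊆ T) (hsim : ∀ a Y, csim Y w.1 (s a).2.1 → Y ⊆ X)
    (hstr : str ∅ T Set.univ ⁻¹' cF F0 w.1 ⊆ cF F0 v.1)
    (henf : enforced (cF F0 w.1) T X s ⊆ cF F0 v.1) (hd : d.1 ∈ cF F0 v.1)
    (hw : MaximalConsistent (cF F0 w.1)) :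
    Mech T0 F0 w (Function.extend Subtype.val s fun _ => d) v := by
  intro E T' Y ψ hE hvote hnear hT' _
  have extend_mem (a : A) (ha : a ∈ C) :
      Function.extend Subtype.val s (fun _ => d) a = s ⟨a, ha⟩ :=
    Subtype.val_injective.extend_apply s _ ⟨a, ha⟩
  by_cases hEC : E ⊆ C
  · rcases E.eq_empty_or_nonempty with rfl | ⟨a, ha⟩
    · exact hstr (hw.mem_of_thm_imp
        (.monoS (hT'.trans htrust) (Set.subset_univ Y) subset_rfl) hE)
    · have hYX : Y ⊆ X := hsim ⟨a, hEC ha⟩ Y (extend_mem a (hEC ha) ▸ hnear a ha)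
      have hvoters : E ⊆ voters s ψ := fun b hb =>
        ⟨hEC hb, extend_mem b (hEC hb) ▸ hvote b hb⟩
      exact henf (hw.mem_of_thm_imp (.monoS (hT'.trans htrust) hYX hvoters) hE)
  · obtain ⟨a, haE, haC⟩ := Set.not_subset.1 hEC
    have hdψ : d.1 = ψ := by
      rw [← hvote a haE, Function.extend_apply' _ _ _ fun ⟨c, hc⟩ => haC (hc ▸ c.2)]
    exact hdψ ▸ hd

end CanonicalTree

/-- for any canonical state w, any ¬[C]^T_X φ ∈ F(w), and any action
profile s ∈ Δ^C, there are canonical states w', v and a complete action profile δ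
such that w ∼_X w', s =_C δ, T ⊆ 𝒯_{w'}, T ⊆ 𝒯_v, (w', δ, v) ∈ M, and φ ∉ F(v). -/
theorem strategy_child_exists {P V A B : Type}
    (T0 : Set V) (F0 : Set (Formula P V A))
    (hF0 : MaximalConsistent F0) (hB : Cardinal.mk A < Cardinal.mk B)
    (w : CState T0 F0 B) (C : Set A) (T X : Set V) (φ : Formula P V A)
    (h : Formula.neg (Formula.str C T X φ) ∈ cF F0 w.1)
    (s : {a : A // a ∈ C} → Formula P V A × CState T0 F0 B) :
    ∃ (w' v : CState T0 F0 B) (δ : A → Formula P V A × CState T0 F0 B),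
      csim X w.1 w'.1 ∧
      (∀ (a : A) (ha : a ∈ C), s ⟨a, ha⟩ = δ a) ∧
      T ⊆ cTrust T0 w'.1 ∧ T ⊆ cTrust T0 v.1 ∧
      Mech T0 F0 w' δ v ∧
      φ ∉ cF F0 v.1 := by
  have hFw := w.2.maximalConsistent_cF hF0
  obtain ⟨F', G, hF', hG, hbel, hstr, henf, hφ⟩ := hFw.exists_enforced_subset h s
  obtain ⟨b, hb⟩ := exists_label_not_prefix ((Cardinal.mk_subtype_le C).trans_lt hB) w.1
    fun a => (s a).2.1
  let w' : CState T0 F0 B :=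
    ⟨w.1 ++ [⟨X, b, T, F'⟩], w.2.snoc_of_preimage_bel_subset hFw hF' hbel⟩
  have hFw' : cF F0 w'.1 = F' := cF_append_singleton F0 _ _
  have hpublic : Formula.bel T ∅ ⁻¹' F' ⊆ G :=
    fun χ hχ => hstr (hF'.mem_of_thm_imp .bel_empty_imp_str_empty hχ)
  let v : CState T0 F0 B := ⟨w'.1 ++ [⟨∅, b, T, G⟩],
    w'.2.snoc_of_preimage_bel_subset (hFw'.symm ▸ hF') hG (hFw'.symm ▸ hpublic)⟩
  have hFv : cF F0 v.1 = G := cF_append_singleton F0 _ _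
  have hTw' : cTrust T0 w'.1 = T := cTrust_append_singleton T0 _ _
  have hTv : cTrust T0 v.1 = T := cTrust_append_singleton T0 _ _
  refine ⟨w', v, Function.extend Subtype.val s fun _ => (Formula.imp φ φ, w),
    csim_append_singleton subset_rfl,
    fun a ha => (Subtype.val_injective.extend_apply s _ ⟨a, ha⟩).symm,
    hTw'.ge, hTv.ge, ?_, hFv.symm ▸ hφ⟩
  have htop : Formula.imp φ φ ∈ G := hG.mem_of_thm (.taut fun _ _ hi => (hi φ φ).2 id)
  rw [← hFw'] at hF' hstr henf
  rw [← hFv] at hstr henf htop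
  exact mech_extend hTw'.le (fun a Y => subset_of_csim_of_not_prefix (hb _ a rfl))
    hstr henf htop hF'
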